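/- arXiv:1905.08445 — 2 statements merged into one kernel-verified Lean document; each statement's English description precedes it below -/
import Mathlib

section
/- Function-value proximity in terms of level sets: under Assumption H1 and the Bregman setting with 0 < ε < m/L, for every x̄ ∈ ℝ^n with F̄ = F(x̄), every x with F(x) > F̄, and every t ∈ T(x), one has F(t) − F̄ ≤ E(x) − F̄ ≤ c₀ · infDist(x, [F ≤ F̄])², where c₀ = (3/2)L + M/(2ε) and [F ≤ F̄] = {y | F(y) ≤ F̄}. -/
open Set Metric Filter Topology
open scoped RealInnerProductSpace

noncomputable section

variable {E : Type*} [NormedAddCommGroup E] [InnerProductSpace ℝ E] [FiniteDimensional ℝ E]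

/-- The Bregman distance generated by `K` (with gradient `K'`). -/
def bregD (K : E → ℝ) (K' : E → E) (x y : E) : ℝ := K y - K x - ⟪K' x, y - x⟫

/-- The Bregman proximal mapping: the set of global minimizers of
`y ↦ ⟪∇f x, y - x⟫ + g y + D(x,y)/ε`. -/
def bregT (f' : E → E) (g : E → ℝ) (K : E → ℝ) (K' : E → E) (ε : ℝ) (x : E) : Set E :=
  {y | ∀ z, ⟪f' x, y - x⟫ + g y + bregD K K' x y / ε ≤ ⟪f' x, z - x⟫ + g z + bregD K K' x z / ε}

/-- The Bregman proximal envelope. -/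
def bregEnv (f : E → ℝ) (f' : E → E) (g : E → ℝ) (K : E → ℝ) (K' : E → E) (ε : ℝ) (x : E) : ℝ :=
  ⨅ y : E, (f x + ⟪f' x, y - x⟫ + g y + bregD K K' x y / ε)

/-! By definition of the Bregman distance, the model minimized by `T(x)`, whose minimum is `E(x)`,
equals `y ↦ F(y) + (D_K(x, y) / ε - D_f(x, y))`. Since `∇f` and `∇K` are Lipschitz,
`|D_f(x, y)| ≤ (L / 2) ‖y - x‖²` and `|D_K(x, y)| ≤ (M / 2) ‖y - x‖²`, while strong convexity gives
`D_K(x, y) ≥ (m / 2) ‖y - x‖²`. So for `ε L ≤ m` the model dominates `F`, whence `F(t) ≤ E(x)`, and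
it exceeds `F(y)` by at most `(L / 2 + M / (2 ε)) ‖y - x‖²`; taking the infimum over `F(y) ≤ F̄`
bounds `E(x) - F̄`. -/

section Lipschitz

variable {V W : Type*} [NormedAddCommGroup V] [NormedSpace ℝ V] [NormedAddCommGroup W]
  [NormedSpace ℝ W]

theorem norm_sub_sub_le_of_hasFDerivAt_of_lipschitz_segment {h : V → W} {h' : V → V →L[ℝ] W}
    {C : ℝ} {x y : V} (hh : ∀ z ∈ segment ℝ x y, HasFDerivAt h (h' z) z)
    (hlip : ∀ z ∈ segment ℝ x y, ‖h' z - h' x‖ ≤ C * ‖z - x‖) :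
    ‖h y - h x - h' x (y - x)‖ ≤ C / 2 * ‖y - x‖ ^ 2 := by
  let γ : ℝ → V := AffineMap.lineMap x y
  have hγ_mem : ∀ s ∈ Icc (0 : ℝ) 1, γ s ∈ segment ℝ x y := fun s hs ↦ by
    rw [segment_eq_image_lineMap]
    exact mem_image_of_mem _ hs
  have hγ : ∀ s, HasDerivAt γ (y - x) s := fun s ↦ AffineMap.hasDerivAt_lineMap
  let r : ℝ → W := fun s ↦ h (γ s) - h x - s • h' x (y - x)
  have hr : ∀ s ∈ Icc (0 : ℝ) 1, HasDerivAt r ((h' (γ s) - h' x) (y - x)) s := fun s hs ↦ by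
    simpa [r] using (((hh _ (hγ_mem s hs)).comp_hasDerivAt s (hγ s)).sub_const (h x)).fun_sub
      ((hasDerivAt_id s).smul_const (h' x (y - x)))
  have hquad : ∀ s : ℝ, HasDerivAt (fun s ↦ C / 2 * ‖y - x‖ ^ 2 * s ^ 2)
      (C * ‖y - x‖ ^ 2 * s) s := fun s ↦ by
    refine ((hasDerivAt_pow 2 s).const_mul (C / 2 * ‖y - x‖ ^ 2)).congr_deriv ?_
    push_cast
    ring
  have hr_le : ∀ s ∈ Ico (0 : ℝ) 1, ‖(h' (γ s) - h' x) (y - x)‖ ≤ C * ‖y - x‖ ^ 2 * s := by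
    intro s hs
    calc ‖(h' (γ s) - h' x) (y - x)‖
        ≤ C * ‖γ s - x‖ * ‖y - x‖ :=
          (h' (γ s) - h' x).le_of_opNorm_le (hlip _ (hγ_mem s (Ico_subset_Icc_self hs))) _
      _ = C * ‖y - x‖ ^ 2 * s := by
          rw [← dist_eq_norm, dist_lineMap_left, Real.norm_of_nonneg hs.1, dist_eq_norm']
          ring
  simpa [r, γ] using image_norm_le_of_norm_deriv_right_le_deriv_boundary
    (fun s hs ↦ (hr s hs).continuousAt.continuousWithinAt)
    (fun s hs ↦ (hr s (Ico_subset_Icc_self hs)).hasDerivWithinAt) (by simp [r, γ]) hquad hr_le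
    (right_mem_Icc.2 zero_le_one)

end Lipschitz

theorem le_comp_infDist {X α : Type*} [PseudoMetricSpace X] [TopologicalSpace α] [Preorder α]
    [ClosedIciTopology α] {s : Set X} (hs : s.Nonempty) {x : X} {φ : ℝ → α} (hφ : Continuous φ)
    {a : α} (h : ∀ y ∈ s, a ≤ φ (dist x y)) : a ≤ φ (infDist x s) := by
  have hmem : infDist x s ∈ closure (dist x '' s) := by
    rw [infDist_eq_iInf, ← sInf_image']
    exact csInf_mem_closure (hs.image _) ⟨0, forall_mem_image.2 fun _ _ ↦ dist_nonneg⟩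
  have hsub : dist x '' s ⊆ φ ⁻¹' Ici a := image_subset_iff.2 h
  exact closure_minimal hsub (isClosed_Ici.preimage hφ) hmem

section Bregman

variable {H : Type*} [NormedAddCommGroup H] [InnerProductSpace ℝ H]

theorem abs_bregD_le_of_lipschitz_gradient [CompleteSpace H] {h : H → ℝ} {h' : H → H} {C : ℝ}
    (hh : ∀ x, HasGradientAt h (h' x) x) (hlip : ∀ x y, ‖h' x - h' y‖ ≤ C * ‖x - y‖) (x y : H) :
    |bregD h h' x y| ≤ C / 2 * ‖y - x‖ ^ 2 := by
  have hlip_dual : ∀ z ∈ segment ℝ x y,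
      ‖InnerProductSpace.toDual ℝ H (h' z) - InnerProductSpace.toDual ℝ H (h' x)‖
        ≤ C * ‖z - x‖ := fun z _ ↦ by
    rw [← map_sub, LinearIsometryEquiv.norm_map]
    exact hlip z x
  exact norm_sub_sub_le_of_hasFDerivAt_of_lipschitz_segment
    (fun z _ ↦ (hh z).hasFDerivAt) hlip_dual

/-- The model of `f + g` at `x` minimized by the Bregman proximal mapping: `f` is linearized at `x`
and `g` is kept. The constant `f x`, absent from `bregT`, makes `bregEnv` its infimum over `y`. -/
def bregModel (f : H → ℝ) (f' : H → H) (g K : H → ℝ) (K' : H → H) (ε : ℝ) (x y : H) : ℝ :=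
  f x + ⟪f' x, y - x⟫ + g y + bregD K K' x y / ε

variable {f g K : H → ℝ} {f' K' : H → H} {ε L m M : ℝ} {x y t : H}

theorem bregModel_eq_add_bregD_sub_bregD :
    bregModel f f' g K K' ε x y = f y + g y + (bregD K K' x y / ε - bregD f f' x y) := by
  simp only [bregModel, bregD]
  ring

theorem isLeast_bregModel_of_mem_bregT (ht : t ∈ bregT f' g K K' ε x) :
    IsLeast (range (bregModel f f' g K K' ε x)) (bregModel f f' g K K' ε x t) := by
  refine ⟨mem_range_self t, forall_mem_range.2 fun z ↦ ?_⟩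
  simp only [bregModel]
  linarith [ht z]

theorem bregEnv_eq_bregModel_of_mem_bregT (ht : t ∈ bregT f' g K K' ε x) :
    bregEnv f f' g K K' ε x = bregModel f f' g K K' ε x t :=
  (isLeast_bregModel_of_mem_bregT ht).csInf_eq

theorem le_bregModel (hε : 0 < ε) (hεL : ε * L ≤ m) (hf : bregD f f' x y ≤ L / 2 * ‖y - x‖ ^ 2)
    (hK : m / 2 * ‖y - x‖ ^ 2 ≤ bregD K K' x y) :
    f y + g y ≤ bregModel f f' g K K' ε x y := by
  have hfK : bregD f f' x y ≤ bregD K K' x y / ε := by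
    rw [le_div_iff₀ hε]
    calc bregD f f' x y * ε
        ≤ L / 2 * ‖y - x‖ ^ 2 * ε := by gcongr
      _ = ε * L / 2 * ‖y - x‖ ^ 2 := by ring
      _ ≤ m / 2 * ‖y - x‖ ^ 2 := by gcongr
      _ ≤ bregD K K' x y := hK
  rw [bregModel_eq_add_bregD_sub_bregD]
  linarith

theorem bregModel_le (hε : 0 < ε) (hf : -(L / 2 * ‖y - x‖ ^ 2) ≤ bregD f f' x y)
    (hK : bregD K K' x y ≤ M / 2 * ‖y - x‖ ^ 2) :
    bregModel f f' g K K' ε x y ≤ f y + g y + (L / 2 + M / (2 * ε)) * ‖y - x‖ ^ 2 := by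
  have hK_div : bregD K K' x y / ε ≤ M / (2 * ε) * ‖y - x‖ ^ 2 :=
    calc bregD K K' x y / ε
        ≤ M / 2 * ‖y - x‖ ^ 2 / ε := by gcongr
      _ = M / (2 * ε) * ‖y - x‖ ^ 2 := by ring
  rw [bregModel_eq_add_bregD_sub_bregD]
  linarith

theorem stmt8_general [CompleteSpace H] (hf : ∀ x, HasGradientAt f (f' x) x)
    (hlip : ∀ x y, ‖f' x - f' y‖ ≤ L * ‖x - y‖) (hK : ∀ x, HasGradientAt K (K' x) x)
    (hKstrong : ∀ x y, K x + ⟪K' x, y - x⟫ + m / 2 * ‖y - x‖ ^ 2 ≤ K y)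
    (hKlip : ∀ x y, ‖K' x - K' y‖ ≤ M * ‖x - y‖) (hε : 0 < ε) (hεL : ε * L ≤ m) (xbar : H)
    (ht : t ∈ bregT f' g K K' ε x) :
    f t + g t - (f xbar + g xbar) ≤ bregEnv f f' g K K' ε x - (f xbar + g xbar) ∧
      bregEnv f f' g K K' ε x - (f xbar + g xbar) ≤
        (L / 2 + M / (2 * ε)) * infDist x {y | f y + g y ≤ f xbar + g xbar} ^ 2 := by
  have hDf := abs_bregD_le_of_lipschitz_gradient hf hlip x
  have hDK := abs_bregD_le_of_lipschitz_gradient hK hKlip x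
  have hDK_strong : m / 2 * ‖t - x‖ ^ 2 ≤ bregD K K' x t := by
    rw [bregD]
    linarith [hKstrong x t]
  rw [bregEnv_eq_bregModel_of_mem_bregT ht]
  refine ⟨sub_le_sub_right (le_bregModel hε hεL (le_of_abs_le (hDf t)) hDK_strong) _, ?_⟩
  have hne : {y | f y + g y ≤ f xbar + g xbar}.Nonempty := ⟨xbar, le_refl (f xbar + g xbar)⟩
  have hcont : Continuous fun d : ℝ ↦ (L / 2 + M / (2 * ε)) * d ^ 2 := by fun_prop
  refine le_comp_infDist hne hcont fun y (hy : f y + g y ≤ f xbar + g xbar) ↦ ?_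
  have hmin : bregModel f f' g K K' ε x t ≤ bregModel f f' g K K' ε x y :=
    (isLeast_bregModel_of_mem_bregT ht).2 (mem_range_self y)
  have hle : bregModel f f' g K K' ε x y ≤ f y + g y + (L / 2 + M / (2 * ε)) * ‖y - x‖ ^ 2 :=
    bregModel_le hε (neg_le_of_abs_le (hDf y)) (le_of_abs_le (hDK y))
  rw [dist_comm, dist_eq_norm]
  linarith

end Bregman

/-- Function-value proximity in terms of level sets:
`F(t) - F̄ ≤ E(x) - F̄ ≤ c₀ · infDist(x, [F ≤ F̄])²` with `c₀ = (3/2)L + M/(2ε)`. -/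
theorem stmt8
    (f g : E → ℝ) (f' : E → E) (L : ℝ)
    (hL : 0 < L)
    (hf : ∀ x, HasGradientAt f (f' x) x)
    (hlip : ∀ x y, ‖f' x - f' y‖ ≤ L * ‖x - y‖)
    (hg : Continuous g)
    (hlevel : ∀ r : ℝ, Bornology.IsBounded {x : E | f x + g x ≤ r})
    (K : E → ℝ) (K' : E → E) (m M : ℝ)
    (hm : 0 < m) (hmM : m ≤ M)
    (hK : ∀ x, HasGradientAt K (K' x) x)
    (hKstrong : ∀ x y : E, K x + ⟪K' x, y - x⟫ + m / 2 * ‖y - x‖ ^ 2 ≤ K y)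
    (hKlip : ∀ x y, ‖K' x - K' y‖ ≤ M * ‖x - y‖)
    (ε : ℝ) (hε : 0 < ε)
    (hεL : ε * L < m) :
    ∀ xbar x : E, f xbar + g xbar < f x + g x →
      ∀ t ∈ bregT f' g K K' ε x,
        f t + g t - (f xbar + g xbar) ≤ bregEnv f f' g K K' ε x - (f xbar + g xbar) ∧
        bregEnv f f' g K K' ε x - (f xbar + g xbar) ≤
          (3 / 2 * L + M / (2 * ε)) *
            Metric.infDist x {y : E | f y + g y ≤ f xbar + g xbar} ^ 2 := by
  intro xbar x _ t ht
  have h := stmt8_general hf hlip hK hKstrong hKlip hε hεL.le xbar ht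
  exact ⟨h.1, h.2.trans (mul_le_mul_of_nonneg_right (by linarith) (sq_nonneg _))⟩
end
end

section
/- For any VBPG sequence (x^k), the function values satisfy the sufficient decrease property F(x^k) − F(x^{k+1}) ≥ a·‖x^k − x^{k+1}‖² for all k, with a = (1/2)(m/ε̄ − L) > 0; consequently the sequence (F(x^k)) is nonincreasing and the series ∑_{k=0}^∞ ‖x^k − x^{k+1}‖² converges (is summable). -/
open Set Metric Filter Topology
open scoped RealInnerProductSpace

noncomputable section

variable {E : Type*} [NormedAddCommGroup E] [InnerProductSpace ℝ E] [FiniteDimensional ℝ E]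

/-!
Testing the minimality of `x (k+1)` against the competitor `x k` gives
`⟪∇f (x k), x (k+1) - x k⟫ + g (x (k+1)) + D (x k, x (k+1)) / ε k ≤ g (x k)`. Replacing the inner
product by the quadratic upper bound on `f` costs `L / 2 * ‖x k - x (k+1)‖ ^ 2`, while strong
convexity makes the Bregman term worth at least `m / (2 ε k) * ‖x k - x (k+1)‖ ^ 2`; the condition
`ε k ≤ εhi < m / L` makes the gain exceed the cost by a fixed factor. Summability follows by
telescoping, since the objective is bounded below.
-/

theorem norm_sub_sub_le_of_hasFDerivAt_of_norm_fderiv_sub_le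
    {V W : Type*} [NormedAddCommGroup V] [NormedSpace ℝ V] [NormedAddCommGroup W] [NormedSpace ℝ W]
    {f : V → W} {f' : V → V →L[ℝ] W} {L : ℝ} {x y : V}
    (hf : ∀ z ∈ segment ℝ x y, HasFDerivAt f (f' z) z)
    (hlip : ∀ z ∈ segment ℝ x y, ‖f' z - f' x‖ ≤ L * ‖z - x‖) :
    ‖f y - f x - f' x (y - x)‖ ≤ L / 2 * ‖y - x‖ ^ 2 := by
  let γ : ℝ → V := AffineMap.lineMap x y
  have hγ_sub (t : ℝ) : γ t - x = t • (y - x) := by simp [γ, AffineMap.lineMap_apply]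
  have hγ_mem {t : ℝ} (ht : t ∈ Icc (0 : ℝ) 1) : γ t ∈ segment ℝ x y :=
    lineMap_mem_segment ℝ x y ht
  have hderiv {t : ℝ} (ht : t ∈ Icc (0 : ℝ) 1) :
      HasDerivAt (fun s ↦ f (γ s) - f x - s • f' x (y - x)) ((f' (γ t) - f' x) (y - x)) t := by
    have hcomp : HasDerivAt (fun s ↦ f (γ s)) (f' (γ t) (y - x)) t :=
      (hf _ (hγ_mem ht)).comp_hasDerivAt t AffineMap.hasDerivAt_lineMap
    simpa using (hcomp.sub_const (f x)).fun_sub ((hasDerivAt_id t).smul_const (f' x (y - x)))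
  have hbound_deriv (t : ℝ) :
      HasDerivAt (fun s ↦ L / 2 * ‖y - x‖ ^ 2 * s ^ 2) (L * ‖y - x‖ ^ 2 * t) t :=
    ((hasDerivAt_pow 2 t).const_mul (L / 2 * ‖y - x‖ ^ 2)).congr_deriv (by push_cast; ring)
  have hderiv_le {t : ℝ} (ht : t ∈ Ico (0 : ℝ) 1) :
      ‖(f' (γ t) - f' x) (y - x)‖ ≤ L * ‖y - x‖ ^ 2 * t :=
    calc ‖(f' (γ t) - f' x) (y - x)‖
        ≤ ‖f' (γ t) - f' x‖ * ‖y - x‖ := ContinuousLinearMap.le_opNorm _ _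
      _ ≤ L * ‖γ t - x‖ * ‖y - x‖ := by gcongr; exact hlip _ (hγ_mem (Ico_subset_Icc_self ht))
      _ = L * ‖y - x‖ ^ 2 * t := by
        rw [hγ_sub, norm_smul, Real.norm_of_nonneg ht.1]; ring
  have hle := image_norm_le_of_norm_deriv_right_le_deriv_boundary
    (fun t ht ↦ (hderiv ht).continuousAt.continuousWithinAt)
    (fun t ht ↦ (hderiv (Ico_subset_Icc_self ht)).hasDerivWithinAt)
    (by simp [γ]) hbound_deriv (fun t ht ↦ hderiv_le ht) (right_mem_Icc.2 zero_le_one)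
  simpa [γ] using hle

theorem bddBelow_range_of_isBounded_preimage_Iic
    {X β : Type*} [PseudoMetricSpace X] [ProperSpace X] [LinearOrder β] {F : X → β} {r : β}
    (hF : LowerSemicontinuous F) (hr : Bornology.IsBounded (F ⁻¹' Iic r)) :
    BddBelow (range F) := by
  have : Nonempty β := ⟨r⟩
  have hcompact : IsCompact (F ⁻¹' Iic r) :=
    isCompact_of_isClosed_isBounded (hF.isClosed_preimage r) hr
  obtain ⟨c, hc⟩ := (hF.lowerSemicontinuousOn _).bddBelow_of_isCompact hcompact
  refine ⟨min c r, forall_mem_range.2 fun x ↦ ?_⟩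
  rcases le_total (F x) r with hx | hx
  · exact (min_le_left c r).trans (hc (mem_image_of_mem F hx))
  · exact (min_le_right c r).trans hx

theorem summable_of_le_sub_succ {u s : ℕ → ℝ} (hu : BddBelow (range u)) (hs : ∀ k, 0 ≤ s k)
    (hsu : ∀ k, s k ≤ u k - u (k + 1)) : Summable s := by
  obtain ⟨c, hc⟩ := hu
  refine summable_of_sum_range_le (c := u 0 - c) hs fun n ↦ ?_
  calc ∑ k ∈ Finset.range n, s k
      ≤ ∑ k ∈ Finset.range n, (u k - u (k + 1)) := Finset.sum_le_sum fun k _ ↦ hsu k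
    _ = u 0 - u n := Finset.sum_range_sub' u n
    _ ≤ u 0 - c := sub_le_sub_left (hc (mem_range_self n)) _

section Bregman

variable {H : Type*} [NormedAddCommGroup H] [InnerProductSpace ℝ H]

theorem le_add_inner_add_of_norm_gradient_sub_le [CompleteSpace H] {f : H → ℝ} {f' : H → H} {L : ℝ}
    {x y : H} (hf : ∀ z ∈ segment ℝ x y, HasGradientAt f (f' z) z)
    (hlip : ∀ z ∈ segment ℝ x y, ‖f' z - f' x‖ ≤ L * ‖z - x‖) :
    f y ≤ f x + ⟪f' x, y - x⟫ + L / 2 * ‖y - x‖ ^ 2 := by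
  have htaylor : ‖f y - f x - ⟪f' x, y - x⟫‖ ≤ L / 2 * ‖y - x‖ ^ 2 :=
    norm_sub_sub_le_of_hasFDerivAt_of_norm_fderiv_sub_le
      (f' := fun z ↦ InnerProductSpace.toDual ℝ H (f' z)) (fun z hz ↦ (hf z hz).hasFDerivAt)
      fun z hz ↦ by simpa only [← map_sub, LinearIsometryEquiv.norm_map] using hlip z hz
  linarith [le_of_abs_le htaylor]

theorem bregD_self (K : H → ℝ) (K' : H → H) (x : H) : bregD K K' x x = 0 := by
  simp [bregD]

theorem half_mul_sq_norm_le_bregD {K : H → ℝ} {K' : H → H} {m μ : ℝ} {x y : H} (hmμ : m ≤ μ)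
    (hK : K x + ⟪K' x, y - x⟫ + μ / 2 * ‖y - x‖ ^ 2 ≤ K y) :
    m / 2 * ‖y - x‖ ^ 2 ≤ bregD K K' x y :=
  calc m / 2 * ‖y - x‖ ^ 2 ≤ μ / 2 * ‖y - x‖ ^ 2 := by gcongr
    _ ≤ bregD K K' x y := by unfold bregD; linarith

theorem inner_add_add_bregD_div_le_of_mem_bregT {f' : H → H} {g K : H → ℝ} {K' : H → H} {ε : ℝ}
    {x y : H} (hy : y ∈ bregT f' g K K' ε x) :
    ⟪f' x, y - x⟫ + g y + bregD K K' x y / ε ≤ g x := by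
  simpa [bregD_self] using hy x

theorem sufficient_decrease_of_mem_bregT {f g K : H → ℝ} {f' K' : H → H} {L m ε : ℝ} {x y : H}
    (hε : 0 < ε) (hf : f y ≤ f x + ⟪f' x, y - x⟫ + L / 2 * ‖y - x‖ ^ 2)
    (hK : m / 2 * ‖y - x‖ ^ 2 ≤ bregD K K' x y) (hy : y ∈ bregT f' g K K' ε x) :
    1 / 2 * (m / ε - L) * ‖x - y‖ ^ 2 ≤ f x + g x - (f y + g y) := by
  have hbreg : m / 2 * ‖y - x‖ ^ 2 / ε ≤ bregD K K' x y / ε := by gcongr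
  calc 1 / 2 * (m / ε - L) * ‖x - y‖ ^ 2
      = m / 2 * ‖y - x‖ ^ 2 / ε - L / 2 * ‖y - x‖ ^ 2 := by rw [norm_sub_rev]; ring
    _ ≤ f x + g x - (f y + g y) := by
      linarith [inner_add_add_bregD_div_le_of_mem_bregT hy]

theorem stmt10_general [CompleteSpace H]
    {f g : H → ℝ} {f' : H → H} {L : ℝ}
    (hf : ∀ x, HasGradientAt f (f' x) x)
    (hlip : ∀ x y, ‖f' x - f' y‖ ≤ L * ‖x - y‖)
    (hbdd : BddBelow (range fun x ↦ f x + g x))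
    {K : ℕ → H → ℝ} {K' : ℕ → H → H} {ε : ℕ → ℝ} {εhi m : ℝ} {x : ℕ → H} (hm : 0 < m)
    (_hK : ∀ k y, HasGradientAt (K k) (K' k y) y)
    (hKstrong : ∀ k y z, m / 2 * ‖z - y‖ ^ 2 ≤ bregD (K k) (K' k) y z)
    (hεhi : εhi * L < m) (hε : ∀ k, ε k ∈ Ioc 0 εhi)
    (hiter : ∀ k, x (k + 1) ∈ bregT f' g (K k) (K' k) (ε k) (x k)) :
    (0 < 1 / 2 * (m / εhi - L)) ∧
    (∀ k, f (x k) + g (x k) - (f (x (k + 1)) + g (x (k + 1))) ≥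
      1 / 2 * (m / εhi - L) * ‖x k - x (k + 1)‖ ^ 2) ∧
    Antitone (fun k ↦ f (x k) + g (x k)) ∧
    Summable (fun k ↦ ‖x k - x (k + 1)‖ ^ 2) := by
  have hεhi_pos : 0 < εhi := (hε 0).1.trans_le (hε 0).2
  have hrate : 0 < 1 / 2 * (m / εhi - L) :=
    mul_pos one_half_pos (sub_pos.2 ((lt_div_iff₀' hεhi_pos).2 hεhi))
  have hdecrease (k : ℕ) : 1 / 2 * (m / εhi - L) * ‖x k - x (k + 1)‖ ^ 2 ≤
      f (x k) + g (x k) - (f (x (k + 1)) + g (x (k + 1))) :=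
    calc 1 / 2 * (m / εhi - L) * ‖x k - x (k + 1)‖ ^ 2
        ≤ 1 / 2 * (m / ε k - L) * ‖x k - x (k + 1)‖ ^ 2 := by
          gcongr
          exacts [(hε k).1, (hε k).2]
      _ ≤ _ := sufficient_decrease_of_mem_bregT (hε k).1
          (le_add_inner_add_of_norm_gradient_sub_le (fun z _ ↦ hf z) fun z _ ↦ hlip z (x k))
          (hKstrong k _ _) (hiter k)
  have hnonneg (k : ℕ) : 0 ≤ 1 / 2 * (m / εhi - L) * ‖x k - x (k + 1)‖ ^ 2 := by positivity
  refine ⟨hrate, hdecrease, antitone_nat_of_succ_le fun k ↦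
    sub_nonneg.1 ((hnonneg k).trans (hdecrease k)), (summable_mul_left_iff hrate.ne').1 ?_⟩
  exact summable_of_le_sub_succ (hbdd.mono (range_comp_subset_range x _)) hnonneg hdecrease

end Bregman

/-- Sufficient decrease along VBPG iterates, monotonicity of the values, and
square-summability of the successive displacements. -/
theorem stmt10
    (f g : E → ℝ) (f' : E → E) (L : ℝ)
    (hL : 0 < L)
    (hf : ∀ x, HasGradientAt f (f' x) x)
    (hlip : ∀ x y, ‖f' x - f' y‖ ≤ L * ‖x - y‖)
    (hg : Continuous g)
    (hlevel : ∀ r : ℝ, Bornology.IsBounded {x : E | f x + g x ≤ r})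
    (Kk : ℕ → E → ℝ) (Kk' : ℕ → E → E) (mk Mk : ℕ → ℝ) (εk : ℕ → ℝ) (εlo εhi : ℝ)
    (x : ℕ → E) (m M : ℝ) (hm : 0 < m) (hmM : m ≤ M)
    (hmk : ∀ k, m ≤ mk k) (hMk : ∀ k, Mk k ≤ M)
    (hKk : ∀ k y, HasGradientAt (Kk k) (Kk' k y) y)
    (hKkstrong : ∀ k (y z : E), Kk k y + ⟪Kk' k y, z - y⟫ + mk k / 2 * ‖z - y‖ ^ 2 ≤ Kk k z)
    (hKklip : ∀ k (y z : E), ‖Kk' k y - Kk' k z‖ ≤ Mk k * ‖y - z‖)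
    (hεlo : 0 < εlo) (hεle : εlo ≤ εhi) (hεhi : εhi * L < m)
    (hεk : ∀ k, εk k ∈ Set.Icc εlo εhi)
    (hiter : ∀ k, x (k+1) ∈ bregT f' g (Kk k) (Kk' k) (εk k) (x k))
    :
    (0 < 1 / 2 * (m / εhi - L)) ∧
    (∀ k, f (x k) + g (x k) - (f (x (k+1)) + g (x (k+1))) ≥
      1 / 2 * (m / εhi - L) * ‖x k - x (k+1)‖ ^ 2) ∧
    Antitone (fun k => f (x k) + g (x k)) ∧
    Summable (fun k => ‖x k - x (k+1)‖ ^ 2) := by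
  have hF : Continuous fun y ↦ f y + g y :=
    (continuous_iff_continuousAt.2 fun y ↦ (hf y).continuousAt).add hg
  exact stmt10_general hf hlip
    (bddBelow_range_of_isBounded_preimage_Iic hF.lowerSemicontinuous (hlevel 0)) hm hKk
    (fun k y z ↦ half_mul_sq_norm_le_bregD (hmk k) (hKkstrong k y z)) hεhi
    (fun k ↦ ⟨hεlo.trans_le (hεk k).1, (hεk k).2⟩) hiter
end
end
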